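/- Let 1≤p≤2 and let ω be a radial weight in the class 𝒟=D̂∩Ď. Then there exists a constant C=C(p,ω)≥1 such that for every injective analytic function f on 𝔻 with Maclaurin coefficients f̂(k): (1/C)·Σ_{k=0}^∞ |f̂(k)|^p (k+1)^{p−1} ω_k ≤ J^p_ω(f) ≤ C·Σ_{k=0}^∞ |f̂(k)|^p (k+1)^{p−1} ω_k. -/

import Mathlib

open MeasureTheory Real Set Metric

noncomputable section

/-- The tail integral `ω̂(r) = ∫_r^1 ω(t) dt` of a radial weight, as a function of the radius. -/
def tailInt (ω : ℝ → ℝ) (r : ℝ) : ℝ := ∫ t in Ioo r 1, ω t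

/-- A radial weight on the unit disc, identified with its profile on `[0,1)`:
nonnegative, measurable, integrable on `(0,1)`, with strictly positive tail integrals. -/
def IsRadialWeight (ω : ℝ → ℝ) : Prop :=
  Measurable ω ∧ (∀ r, 0 ≤ ω r) ∧ IntegrableOn ω (Ioo (0:ℝ) 1) ∧
    ∀ r ∈ Ico (0:ℝ) 1, 0 < tailInt ω r

/-- The class `D̂` of radial weights whose tail integral satisfies a doubling condition. -/
def Dhat (ω : ℝ → ℝ) : Prop :=
  ∃ C : ℝ, 1 < C ∧ ∀ r ∈ Ico (0:ℝ) 1, tailInt ω r ≤ C * tailInt ω ((1 + r) / 2)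

/-- The class `Ď` of radial weights. -/
def Dcheck (ω : ℝ → ℝ) : Prop :=
  ∃ K : ℝ, 1 < K ∧ ∃ C : ℝ, 1 < C ∧ ∀ r ∈ Ico (0:ℝ) 1,
    C * tailInt ω (1 - (1 - r) / K) ≤ tailInt ω r

/-- The class `𝒟 = D̂ ∩ Ď`. -/
def Dclass (ω : ℝ → ℝ) : Prop := Dhat ω ∧ Dcheck ω

/-- The moment `ω_x = ∫_0^1 r^x ω(r) dr` of a radial weight. -/
def momentW (ω : ℝ → ℝ) (x : ℝ) : ℝ := ∫ r in Ioo (0:ℝ) 1, r ^ x * ω r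

/-- The class `ℳ` of radial weights. -/
def Mclass (ω : ℝ → ℝ) : Prop :=
  ∃ K : ℝ, 1 < K ∧ ∃ C : ℝ, 1 < C ∧ ∀ x : ℝ, 1 ≤ x → C * momentW ω (K * x) ≤ momentW ω x

/-- The maximum modulus `M_∞(r,f)` on the circle of radius `r`. -/
def Minf (f : ℂ → ℂ) (r : ℝ) : ℝ :=
  sSup ((fun z => ‖f z‖) '' sphere (0:ℂ) r)

/-- The integral mean `M_q(r,f)` for `0 < q < ∞`. -/
def Mq (q : ℝ) (f : ℂ → ℂ) (r : ℝ) : ℝ :=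
  ((2 * π)⁻¹ * ∫ θ in (0:ℝ)..(2 * π),
      ‖f ((r : ℂ) * Complex.exp ((θ : ℂ) * Complex.I))‖ ^ q) ^ q⁻¹

/-- `J^p_ω(f) = ∫_0^1 M_∞(r,f)^p ω(r) dr`. -/
def Jp (p : ℝ) (ω : ℝ → ℝ) (f : ℂ → ℂ) : ℝ :=
  ∫ r in Ioo (0:ℝ) 1, Minf f r ^ p * ω r

/-- `‖f‖_{H^p_ω}^p = ∫_𝔻 p²|f|^{p-2}|f'|² ω̂(|z|) dA(z)`, integrand `0` where `f' = 0`. -/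
def HpNormP (p : ℝ) (ω : ℝ → ℝ) (f : ℂ → ℂ) : ℝ :=
  ∫ z in ball (0:ℂ) 1,
    if deriv f z = 0 then 0
    else p ^ 2 * ‖f z‖ ^ (p - 2) * ‖deriv f z‖ ^ 2
        * tailInt ω (‖z‖)

/-- `‖f‖_{S^p_ω}^p = ∫_0^1 (∫_{D(0,r)} |f'|² dA)^{p/2} ω(r) dr`. -/
def SpNormP (p : ℝ) (ω : ℝ → ℝ) (f : ℂ → ℂ) : ℝ :=
  ∫ r in Ioo (0:ℝ) 1,
    (∫ z in ball (0:ℂ) r, ‖deriv f z‖ ^ 2) ^ (p / 2) * ω r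

/-- The `k`-th Maclaurin coefficient `f̂(k) = f^{(k)}(0)/k!`. -/
def coefF (f : ℂ → ℂ) (k : ℕ) : ℂ := iteratedDeriv k f 0 / (k.factorial : ℂ)

/-- Weighted Bergman-type integral `∫_𝔻 |f(z)|^p (1-|z|)^x w(|z|) dA(z)`. -/
def Apq (p x : ℝ) (w : ℝ → ℝ) (f : ℂ → ℂ) : ℝ :=
  ∫ z in ball (0:ℂ) 1,
    ‖f z‖ ^ p * (1 - ‖z‖) ^ x * w (‖z‖)

/-- Weighted Dirichlet-type integral `∫_𝔻 |f'(z)|^p (1-|z|)^x w(|z|) dA(z)`. -/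
def DirInt (p x : ℝ) (w : ℝ → ℝ) (f : ℂ → ℂ) : ℝ :=
  ∫ z in ball (0:ℂ) 1,
    ‖deriv f z‖ ^ p * (1 - ‖z‖) ^ x * w (‖z‖)

/-- The class `𝒮` of normalized univalent functions on the unit disc. -/
def InSclass (f : ℂ → ℂ) : Prop :=
  DifferentiableOn ℂ f (ball (0:ℂ) 1) ∧ InjOn f (ball (0:ℂ) 1) ∧ f 0 = 0 ∧ deriv f 0 = 1


lemma coef_hasSum {g : ℂ → ℂ} (hg : DifferentiableOn ℂ g (ball (0:ℂ) 1)) {z : ℂ}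
    (hz : z ∈ ball (0:ℂ) 1) : HasSum (fun n : ℕ => coefF g n * z ^ n) (g z) := by
  have := Complex.hasSum_taylorSeries_on_ball hg hz
  have h : (fun n : ℕ => coefF g n * z ^ n) =
      (fun n : ℕ ↦ (n.factorial : ℂ)⁻¹ • (z - 0) ^ n • iteratedDeriv n g 0) := by
    funext n
    simp only [coefF, smul_eq_mul, sub_zero]; ring
  rw [h]; exact this

lemma coef_summable {g : ℂ → ℂ} (hg : DifferentiableOn ℂ g (ball (0:ℂ) 1)) {r : ℝ}
    (h0 : 0 ≤ r) (h1 : r < 1) : Summable (fun n : ℕ => ‖coefF g n‖ * r ^ n) := by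
  have := (coef_hasSum hg (z := (r:ℂ)) (by simp [abs_of_nonneg h0, h1])).summable.norm
  simpa [abs_of_nonneg h0] using this

lemma bessel_circle {g : ℂ → ℂ} (hg : DifferentiableOn ℂ g (ball (0:ℂ) 1)) {r : ℝ}
    (h0 : 0 < r) (h1 : r < 1) (s : Finset ℕ) :
    ∑ k ∈ s, ‖coefF g k‖ ^ 2 * r ^ (2 * k) ≤ Real.circleAverage (fun z => ‖g z‖ ^ 2) 0 r := by
  classical
  let P : ℕ → Polynomial ℂ := fun N => ∑ k ∈ Finset.range N, Polynomial.monomial k (coefF g k * r ^ k)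
  have hPe : ∀ N z, (P N).eval z = ∑ k ∈ Finset.range N, coefF g k * (r * z) ^ k := by
    intro N z
    simp [P, Polynomial.eval_finsetSum, mul_pow, mul_assoc]
  have hPc : ∀ N k, (P N).coeff k = if k < N then coefF g k * r ^ k else 0 := by
    intro N k
    simp only [P, Polynomial.finsetSum_coeff, Polynomial.coeff_monomial]
    simp [Finset.sum_ite_eq']
  have hlim : Filter.Tendsto (fun N => Real.circleAverage (fun z => ‖(P N).eval z‖ ^ 2) 0 1)
      Filter.atTop (nhds (Real.circleAverage (fun z => ‖g z‖ ^ 2) 0 r)) := by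
    unfold Real.circleAverage
    apply Filter.Tendsto.const_smul
    apply intervalIntegral.tendsto_integral_filter_of_dominated_convergence
      (fun _ => (∑' k, ‖coefF g k‖ * r ^ k) ^ 2)
    · refine Filter.Eventually.of_forall fun N => ?_
      apply Continuous.aestronglyMeasurable
      have := (P N).continuous
      fun_prop
    · refine Filter.Eventually.of_forall fun N => Filter.Eventually.of_forall fun θ _ => ?_
      rw [Real.norm_of_nonneg (by positivity)]
      refine pow_le_pow_left₀ (norm_nonneg _) ?_ 2
      rw [hPe]
      refine (norm_sum_le _ _).trans ?_
      refine le_trans (le_of_eq ?_) ((coef_summable hg h0.le h1).sum_le_tsum (Finset.range N)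
        (fun _ _ => by positivity))
      refine Finset.sum_congr rfl fun k _ => ?_
      simp [circleMap, abs_of_pos h0]
    · exact intervalIntegrable_const
    · refine Filter.Eventually.of_forall fun θ _ => ?_
      have hz : circleMap 0 r θ ∈ ball (0:ℂ) 1 := by simp [circleMap, abs_of_pos h0, h1]
      have := (coef_hasSum hg hz).tendsto_sum_nat
      have h2 := (this.norm).pow 2
      refine h2.congr fun N => ?_
      show _ = ‖(P N).eval (circleMap 0 1 θ)‖ ^ 2
      rw [hPe]
      simp [circleMap]
  refine ge_of_tendsto hlim ?_
  filter_upwards [Filter.eventually_ge_atTop (s.sup id + 1)] with N hN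
  rw [← Polynomial.sum_sq_norm_coeff_eq_circleAverage]
  have h3 : ∀ k ∈ s, k < N := fun k hk => by
    have := Finset.le_sup (f := id) hk
    simp at this; omega
  have h4 : ∑ i ∈ (P N).support, ‖(P N).coeff i‖ ^ 2 = ∑ i ∈ (P N).support ∪ s, ‖(P N).coeff i‖ ^ 2 := by
    apply Finset.sum_subset Finset.subset_union_left
    intro x _ hx
    simp [Polynomial.notMem_support_iff.1 hx]
  rw [h4]
  refine le_trans (le_of_eq ?_) (Finset.sum_le_sum_of_subset_of_nonneg Finset.subset_union_right
    (fun _ _ _ => by positivity))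
  refine Finset.sum_congr rfl fun k hk => ?_
  rw [hPc, if_pos (h3 k hk)]
  simp [abs_of_pos h0]; ring

lemma coef_deriv {f : ℂ → ℂ} (k : ℕ) :
    coefF (deriv f) k = (k + 1) * coefF f (k + 1) := by
  unfold coefF
  rw [iteratedDeriv_succ', Nat.factorial_succ]
  have : (k.factorial : ℂ) ≠ 0 := by exact_mod_cast Nat.factorial_ne_zero k
  have : (k + 1 : ℂ) ≠ 0 := by exact_mod_cast Nat.succ_ne_zero k
  push_cast
  field_simp

lemma minf_le {f : ℂ → ℂ} (hf : DifferentiableOn ℂ f (ball (0:ℂ) 1)) {r : ℝ}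
    (h0 : 0 ≤ r) (h1 : r < 1) {z : ℂ} (hz : z ∈ closedBall (0:ℂ) r) : ‖f z‖ ≤ Minf f r := by
  have hsub : closedBall (0:ℂ) r ⊆ ball 0 1 := closedBall_subset_ball h1
  have hc : ContinuousOn (fun z => ‖f z‖) (closedBall (0:ℂ) r) := (hf.continuousOn.mono hsub).norm
  have hb : BddAbove ((fun z => ‖f z‖) '' sphere (0:ℂ) r) :=
    (isCompact_sphere _ _).bddAbove_image (hc.mono sphere_subset_closedBall)
  have hs : ∀ z ∈ sphere (0:ℂ) r, ‖f z‖ ≤ Minf f r := fun z hz => le_csSup hb ⟨z, hz, rfl⟩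
  rcases h0.eq_or_lt with rfl | h0
  · apply hs; simpa using hz
  · have hd : DiffContOnCl ℂ f (ball (0:ℂ) r) := by
      apply DifferentiableOn.diffContOnCl
      rw [closure_ball _ h0.ne']
      exact hf.mono hsub
    refine Complex.norm_le_of_forall_mem_frontier_norm_le isBounded_ball hd ?_ (by rwa [closure_ball _ h0.ne'])
    rw [frontier_ball _ h0.ne']; exact hs

lemma minf_nonneg {f : ℂ → ℂ} {r : ℝ} : 0 ≤ Minf f r := by
  apply Real.sSup_nonneg
  rintro _ ⟨z, _, rfl⟩; positivity

lemma minf_mono {f : ℂ → ℂ} (hf : DifferentiableOn ℂ f (ball (0:ℂ) 1)) {r s : ℝ}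
    (h0 : 0 ≤ r) (h1 : r ≤ s) (h2 : s < 1) : Minf f r ≤ Minf f s := by
  apply csSup_le
  · exact (NormedSpace.sphere_nonempty.2 h0).image _
  · rintro _ ⟨z, hz, rfl⟩
    exact minf_le hf (h0.trans h1) h2 (closedBall_subset_closedBall h1 (sphere_subset_closedBall hz))

lemma minf_le_tsum {f : ℂ → ℂ} (hf : DifferentiableOn ℂ f (ball (0:ℂ) 1)) {r : ℝ}
    (h0 : 0 ≤ r) (h1 : r < 1) : Minf f r ≤ ∑' k, ‖coefF f k‖ * r ^ k := by
  apply csSup_le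
  · exact (NormedSpace.sphere_nonempty.2 h0).image _
  · rintro _ ⟨z, hz, rfl⟩
    have hz' : ‖z‖ = r := by simpa using hz
    have := coef_hasSum hf (z := z) (by simp [hz', h1])
    show ‖f z‖ ≤ _
    rw [← this.tsum_eq]
    have hs := coef_summable hf h0 h1
    refine (norm_tsum_le_tsum_norm ?_).trans (le_of_eq ?_)
    · simpa [hz'] using hs
    · simp [hz']

lemma circle_lintegral {g : ℂ → ℂ} (hg : DifferentiableOn ℂ g (ball (0:ℂ) 1)) {r : ℝ}
    (h0 : 0 < r) (h1 : r < 1) (s : Finset ℕ) :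
    ENNReal.ofReal (2 * π * ∑ k ∈ s, ‖coefF g k‖ ^ 2 * r ^ (2 * k)) ≤
      ∫⁻ θ in Ioo (-π) π, ENNReal.ofReal (‖g (Complex.polarCoord.symm (r, θ))‖ ^ 2) := by
  have hb := bessel_circle hg h0 h1 s
  have hcm : ∀ θ : ℝ, Complex.polarCoord.symm (r, θ) = circleMap 0 r θ := by
    intro θ
    simp [circleMap, Complex.exp_mul_I]
  have hmem : ∀ θ : ℝ, circleMap 0 r θ ∈ ball (0:ℂ) 1 := fun θ => by
    simp [circleMap, abs_of_pos h0, h1]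
  have hcont : Continuous (fun θ : ℝ => ‖g (circleMap 0 r θ)‖ ^ 2) := by
    have : Continuous (fun θ : ℝ => g (circleMap 0 r θ)) :=
      hg.continuousOn.comp_continuous (continuous_circleMap 0 r) hmem
    exact this.norm.pow 2
  simp_rw [hcm]
  rw [← ofReal_integral_eq_lintegral_ofReal]
  · apply ENNReal.ofReal_le_ofReal
    have hper : Function.Periodic (fun θ : ℝ => ‖g (circleMap 0 r θ)‖ ^ 2) (2 * π) := by
      intro θ
      simp [periodic_circleMap 0 r θ]
    have h2 := hper.intervalIntegral_add_eq 0 (-π)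
    rw [← integral_Ioc_eq_integral_Ioo, ← intervalIntegral.integral_of_le (by linarith [Real.pi_pos])]
    have h3 : -π + 2 * π = π := by ring
    rw [h3, zero_add] at h2
    rw [← h2]
    unfold Real.circleAverage at hb
    rw [smul_eq_mul, ← div_eq_inv_mul, le_div_iff₀ (by positivity)] at hb
    linarith
  · exact (hcont.integrableOn_Icc (a := -π) (b := π)).mono_set Ioo_subset_Icc_self
  · exact Filter.Eventually.of_forall fun θ => by positivity

lemma det_smulRight (c : ℂ) :
    |(((ContinuousLinearMap.toSpanSingleton ℂ c).restrictScalars ℝ : ℂ →L[ℝ] ℂ)).det| = ‖c‖ ^ 2 := by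
  have : ((((ContinuousLinearMap.toSpanSingleton ℂ c).restrictScalars ℝ : ℂ →L[ℝ] ℂ)).det) = ‖c‖ ^ 2 := by
    simp [ContinuousLinearMap.det, LinearMap.det_restrictScalars, Complex.normSq_eq_norm_sq,
      Algebra.norm_complex_eq]
  rw [this, abs_of_nonneg (by positivity)]

lemma area_le {f : ℂ → ℂ} (hf : DifferentiableOn ℂ f (ball (0:ℂ) 1)) (hi : InjOn f (ball (0:ℂ) 1))
    {r : ℝ} (h0 : 0 < r) (h1 : r < 1) :
    ∫⁻ z in ball (0:ℂ) r, ENNReal.ofReal (‖deriv f z‖ ^ 2) ≤ ENNReal.ofReal (π * Minf f r ^ 2) := by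
  have hsub : ball (0:ℂ) r ⊆ ball 0 1 := ball_subset_ball h1.le
  have := lintegral_abs_det_fderiv_eq_addHaar_image volume (s := ball (0:ℂ) r) (f := f)
    (f' := fun z => (ContinuousLinearMap.toSpanSingleton ℂ (deriv f z)).restrictScalars ℝ)
    measurableSet_ball (fun z hz => by
      have := (hf.differentiableAt (isOpen_ball.mem_nhds (hsub hz))).hasDerivAt.hasFDerivAt
      exact (this.restrictScalars ℝ).hasFDerivWithinAt) (hi.mono hsub)
  simp_rw [det_smulRight] at this
  rw [this]
  have h2 : f '' ball (0:ℂ) r ⊆ closedBall 0 (Minf f r) := by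
    rintro _ ⟨z, hz, rfl⟩
    simpa using minf_le hf h0.le h1 (ball_subset_closedBall hz)
  refine (measure_mono h2).trans (le_of_eq ?_)
  rw [Complex.volume_closedBall, ENNReal.ofReal_mul Real.pi_pos.le, mul_comm,
    ENNReal.ofReal_pow minf_nonneg]
  congr 1
  rw [← NNReal.coe_real_pi, ENNReal.ofReal_coe_nnreal]

lemma area_coef {f : ℂ → ℂ} (hf : DifferentiableOn ℂ f (ball (0:ℂ) 1)) (hi : InjOn f (ball (0:ℂ) 1))
    {r : ℝ} (h0 : 0 < r) (h1 : r < 1) (s : Finset ℕ) :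
    ∑ k ∈ s, ((k:ℝ) + 1) * ‖coefF f (k + 1)‖ ^ 2 * r ^ (2 * k + 2) ≤ Minf f r ^ 2 := by
  have hd : DifferentiableOn ℂ (deriv f) (ball (0:ℂ) 1) := hf.deriv isOpen_ball
  have hA := area_le hf hi h0 h1
  rw [← lintegral_indicator measurableSet_ball, ← Complex.lintegral_comp_polarCoord_symm] at hA
  have hm : Measurable (fun p : ℝ × ℝ => ENNReal.ofReal p.1 •
      (ball (0:ℂ) r).indicator (fun z => ENNReal.ofReal (‖deriv f z‖ ^ 2)) (Complex.polarCoord.symm p)) := by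
    have m1 : Measurable ((ball (0:ℂ) r).indicator (fun z => ENNReal.ofReal (‖deriv f z‖ ^ 2))) :=
      Measurable.indicator (((measurable_deriv f).norm.pow_const 2).ennreal_ofReal) measurableSet_ball
    have m2 : Measurable (fun p : ℝ × ℝ => Complex.polarCoord.symm p) := by
      simp only [Complex.polarCoord_symm_apply]
      fun_prop
    exact (measurable_fst.ennreal_ofReal).smul (m1.comp m2)
  have ht : polarCoord.target = Ioi (0:ℝ) ×ˢ Ioo (-π) π := rfl
  rw [ht, Measure.volume_eq_prod, setLIntegral_prod _ hm.aemeasurable] at hA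
  have hlow : ∫⁻ x in Ioo 0 r, ENNReal.ofReal (2 * π * ∑ k ∈ s, ‖coefF (deriv f) k‖ ^ 2 * x ^ (2 * k + 1))
      ≤ ENNReal.ofReal (π * Minf f r ^ 2) := by
    refine le_trans ?_ hA
    refine le_trans ?_ (lintegral_mono_set (fun x hx => hx.1 : Ioo 0 r ⊆ Ioi 0))
    refine setLIntegral_mono' measurableSet_Ioo fun x hx => ?_
    have h2 := circle_lintegral hd hx.1 (hx.2.trans h1) s
    have h3 : ENNReal.ofReal (2 * π * ∑ k ∈ s, ‖coefF (deriv f) k‖ ^ 2 * x ^ (2 * k + 1)) =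
        ENNReal.ofReal x * ENNReal.ofReal (2 * π * ∑ k ∈ s, ‖coefF (deriv f) k‖ ^ 2 * x ^ (2 * k)) := by
      rw [← ENNReal.ofReal_mul hx.1.le]
      congr 1
      rw [mul_left_comm, Finset.mul_sum, Finset.mul_sum, Finset.mul_sum]
      exact Finset.sum_congr rfl fun k _ => by ring
    rw [h3]
    simp only [smul_eq_mul]
    rw [lintegral_const_mul' _ _ ENNReal.ofReal_ne_top]
    gcongr
    refine h2.trans (le_of_eq ?_)
    refine lintegral_congr fun θ => ?_
    rw [indicator_of_mem]
    rw [mem_ball_zero_iff, Complex.norm_polarCoord_symm, abs_of_pos hx.1]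
    exact hx.2
  have hcont : Continuous (fun x : ℝ => 2 * π * ∑ k ∈ s, ‖coefF (deriv f) k‖ ^ 2 * x ^ (2 * k + 1)) := by
    fun_prop
  rw [← ofReal_integral_eq_lintegral_ofReal
    ((hcont.integrableOn_Icc (a := 0) (b := r)).mono_set Ioo_subset_Icc_self)
    ((ae_restrict_iff' measurableSet_Ioo).2 (Filter.Eventually.of_forall fun x hx => by
      have := hx.1
      positivity)), ENNReal.ofReal_le_ofReal_iff (by positivity),
    ← integral_Ioc_eq_integral_Ioo, ← intervalIntegral.integral_of_le h0.le,
    intervalIntegral.integral_const_mul, intervalIntegral.integral_finsetSum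
      (fun k _ => (by fun_prop : Continuous _).intervalIntegrable _ _)] at hlow
  simp only [intervalIntegral.integral_const_mul, integral_pow] at hlow
  have h5 : 2 * π * ∑ k ∈ s, ‖coefF (deriv f) k‖ ^ 2 *
      ((r ^ (2 * k + 1 + 1) - 0 ^ (2 * k + 1 + 1)) / (((2 * k + 1 : ℕ) : ℝ) + 1)) =
      π * ∑ k ∈ s, ((k:ℝ) + 1) * ‖coefF f (k + 1)‖ ^ 2 * r ^ (2 * k + 2) := by
    rw [mul_comm 2 π, mul_assoc, Finset.mul_sum]
    congr 1
    refine Finset.sum_congr rfl fun k _ => ?_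
    rw [coef_deriv]
    have : ‖((k:ℂ) + 1)‖ = (k:ℝ) + 1 := by
      have := Complex.norm_natCast (k + 1)
      push_cast at this; exact this
    rw [norm_mul, this]
    simp
    field_simp
    ring
  rw [h5] at hlow
  exact le_of_mul_le_mul_left hlow Real.pi_pos

/-- dyadic radii -/
def rr (j : ℕ) : ℝ := 1 - (1 / 2) ^ j

lemma rr_nonneg (j : ℕ) : 0 ≤ rr j := by
  have : ((1:ℝ) / 2) ^ j ≤ 1 := pow_le_one₀ (by norm_num) (by norm_num)
  unfold rr; linarith

lemma rr_lt_one (j : ℕ) : rr j < 1 := by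
  have : (0:ℝ) < (1 / 2) ^ j := by positivity
  unfold rr; linarith

lemma rr_mono : Monotone rr := by
  intro i j hij
  have : ((1:ℝ) / 2) ^ j ≤ (1 / 2) ^ i := pow_le_pow_of_le_one (by norm_num) (by norm_num) hij
  unfold rr; linarith

lemma rr_zero : rr 0 = 0 := by simp [rr]

lemma rr_pow_ge {n k : ℕ} (hk : k ≤ 2 ^ (n + 1)) : (1:ℝ) / 4 ≤ rr (n + 1) ^ k := by
  have h1 : rr (n + 1) ^ (2 ^ (n + 1)) ≤ rr (n + 1) ^ k :=
    pow_le_pow_of_le_one (rr_nonneg _) (rr_lt_one _).le hk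
  have h2 : (1:ℝ) / 2 ≤ rr (n + 1) ^ (2 ^ n) := by
    have := one_add_mul_le_pow (a := -((1:ℝ) / 2) ^ (n + 1)) (by
      have : ((1:ℝ) / 2) ^ (n + 1) ≤ 1 := pow_le_one₀ (by norm_num) (by norm_num)
      linarith) (2 ^ n)
    have h3 : 1 + ((2 ^ n : ℕ) : ℝ) * (-((1:ℝ) / 2) ^ (n + 1)) = 1 / 2 := by
      push_cast
      rw [pow_succ, div_pow, one_pow]
      field_simp
      norm_num
    rw [h3] at this
    unfold rr
    rwa [sub_eq_add_neg]
  calc (1:ℝ) / 4 = (1 / 2) ^ 2 := by norm_num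
    _ ≤ (rr (n + 1) ^ (2 ^ n)) ^ 2 := by gcongr
    _ = rr (n + 1) ^ (2 ^ (n + 1)) := by rw [← pow_mul, pow_succ]
    _ ≤ _ := h1

lemma geomF1 {τ : ℕ → ℝ} (h0 : ∀ j, 0 ≤ τ j) {D : ℝ} (hD : 1 ≤ D) (h1 : ∀ j, τ j ≤ D * τ (j + 1)) :
    ∃ C : ℝ, 0 ≤ C ∧ ∀ j i k : ℕ, 2 ^ (j + i + 1) ≤ k + 1 →
      τ j * rr (j + 1) ^ k ≤ C * (1 / 2) ^ (i + 1) * τ (j + i + 1) := by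
  obtain ⟨L, hL⟩ := pow_unbounded_of_one_lt (2 * D) (by norm_num : (1:ℝ) < 2)
  refine ⟨2 * D * L.factorial * 2 ^ L, by positivity, fun j i k hk => ?_⟩
  have hτ : ∀ i, τ j ≤ D ^ i * τ (j + i) := by
    intro i
    induction i with
    | zero => simp
    | succ i ih =>
      refine ih.trans ?_
      rw [pow_succ, mul_assoc]
      gcongr
      exact h1 _
  have hk2 : 2 ^ (j + i) ≤ k := by
    have : 1 ≤ 2 ^ (j + i) := Nat.one_le_two_pow
    rw [pow_succ] at hk; omega
  set x : ℝ := 2 ^ i / 2 with hx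
  have hx0 : 0 < x := by positivity
  have he : rr (j + 1) ^ k ≤ L.factorial / x ^ L := by
    have h2 : rr (j + 1) ≤ Real.exp (-(1 / 2) ^ (j + 1)) := by
      have := Real.add_one_le_exp (-((1:ℝ) / 2) ^ (j + 1))
      unfold rr; linarith
    calc rr (j + 1) ^ k ≤ rr (j + 1) ^ (2 ^ (j + i)) :=
          pow_le_pow_of_le_one (rr_nonneg _) (rr_lt_one _).le hk2
      _ ≤ (Real.exp (-(1 / 2) ^ (j + 1))) ^ (2 ^ (j + i)) := by
          gcongr
          exact rr_nonneg _
      _ = Real.exp (-x) := by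
          rw [← Real.exp_nat_mul]
          congr 1
          push_cast
          rw [hx, pow_succ, div_pow, one_pow, pow_add]
          field_simp
      _ = (Real.exp x)⁻¹ := Real.exp_neg x
      _ ≤ (x ^ L / L.factorial)⁻¹ := by
          gcongr
          exact Real.pow_div_factorial_le_exp x hx0.le L
      _ = _ := by rw [inv_div]
  have hD0 : (0:ℝ) < D := by linarith
  have h5 : D ^ (i + 1) * (L.factorial / x ^ L) ≤ 2 * D * L.factorial * 2 ^ L * (1 / 2) ^ (i + 1) := by
    have h6 : x ^ L = (2 ^ L) ^ i / 2 ^ L := by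
      rw [hx, div_pow, ← pow_mul, ← pow_mul, mul_comm]
    have h7 : (2 * D) ^ i ≤ (2 ^ L) ^ i := by gcongr
    rw [h6, div_div_eq_mul_div, ← mul_div_assoc, div_le_iff₀ (by positivity)]
    have h8 : 2 * D * L.factorial * 2 ^ L * (1 / 2) ^ (i + 1) * (2 * D) ^ i = D ^ (i + 1) * (L.factorial * 2 ^ L) := by
      rw [mul_pow, div_pow, one_pow]
      field_simp
      ring
    rw [← h8]
    gcongr
  calc τ j * rr (j + 1) ^ k ≤ (D ^ (i + 1) * τ (j + (i + 1))) * (L.factorial / x ^ L) := by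
        gcongr
        · exact pow_nonneg (rr_nonneg _) _
        · exact mul_nonneg (by positivity) (h0 _)
        · exact hτ _
    _ = (D ^ (i + 1) * (L.factorial / x ^ L)) * τ (j + i + 1) := by rw [← add_assoc]; ring
    _ ≤ _ := by
        gcongr
        exact h0 _

lemma geomF2 {τ : ℕ → ℝ} (h0 : ∀ j, 0 ≤ τ j) {D : ℝ} (hD : 1 ≤ D) (h1 : ∀ j, τ (j + 1) ≤ D * τ j)
    {m : ℕ} {q : ℝ} (hq : q < 1) (h2 : ∀ j, τ (j + m) ≤ q * τ j) (n N : ℕ) :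
    ∑ i ∈ Finset.range N, τ (n + i) ≤ (m * D ^ m / (1 - q)) * τ n := by
  have hτ : ∀ i, τ (n + i) ≤ D ^ i * τ n := by
    intro i
    induction i with
    | zero => simp
    | succ i ih =>
      have := h1 (n + i)
      rw [← add_assoc]
      refine this.trans ?_
      rw [pow_succ, mul_comm (D ^ i), mul_assoc]
      gcongr
  have hS : ∑ i ∈ Finset.range N, τ (n + i) ≤ ∑ i ∈ Finset.range (m + N), τ (n + i) :=
    Finset.sum_le_sum_of_subset_of_nonneg (Finset.range_mono (by omega)) (fun _ _ _ => h0 _)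
  rw [Finset.sum_range_add] at hS
  have hA : ∑ i ∈ Finset.range m, τ (n + i) ≤ m * D ^ m * τ n := by
    have : ∀ i ∈ Finset.range m, τ (n + i) ≤ D ^ m * τ n := fun i hi => by
      refine (hτ i).trans ?_
      have := Finset.mem_range.1 hi
      gcongr
      · exact h0 _
    have := Finset.sum_le_card_nsmul _ _ _ this
    simpa [mul_assoc] using this
  have hB : ∑ i ∈ Finset.range N, τ (n + (m + i)) ≤ q * ∑ i ∈ Finset.range N, τ (n + i) := by
    rw [Finset.mul_sum]
    refine Finset.sum_le_sum fun i _ => ?_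
    have := h2 (n + i)
    rwa [show n + (m + i) = n + i + m by ring]
  rw [div_mul_eq_mul_div, le_div_iff₀ (by linarith)]
  nlinarith

lemma geomF {τ : ℕ → ℝ} (h0 : ∀ j, 0 ≤ τ j) {D : ℝ} (hD : 1 ≤ D) (h1 : ∀ j, τ j ≤ D * τ (j + 1))
    (h1' : ∀ j, τ (j + 1) ≤ D * τ j)
    {m : ℕ} {q : ℝ} (hq : q < 1) (h2 : ∀ j, τ (j + m) ≤ q * τ j) :
    ∃ C : ℝ, 0 ≤ C ∧ ∀ n k : ℕ, 2 ^ n ≤ k + 1 →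
      ∑' j, ENNReal.ofReal (τ j * rr (j + 1) ^ k) ≤ ENNReal.ofReal (C * τ n) := by
  obtain ⟨C1, hC1, hF1⟩ := geomF1 h0 hD h1
  have hF2 := geomF2 h0 hD h1' hq h2
  have h1q : 0 < 1 - q := by linarith
  refine ⟨C1 + m * D ^ m / (1 - q), by positivity, fun n k hk => ?_⟩
  have hnn : ∀ j, 0 ≤ τ j * rr (j + 1) ^ k := fun j => mul_nonneg (h0 _) (pow_nonneg (rr_nonneg _) _)
  refine ENNReal.tsum_le_of_sum_range_le fun N => ?_
  rw [← ENNReal.ofReal_sum_of_nonneg (fun j _ => hnn j)]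
  apply ENNReal.ofReal_le_ofReal
  have hS : ∑ j ∈ Finset.range N, τ j * rr (j + 1) ^ k ≤ ∑ j ∈ Finset.range (n + N), τ j * rr (j + 1) ^ k :=
    Finset.sum_le_sum_of_subset_of_nonneg (Finset.range_mono (by omega)) (fun j _ _ => hnn j)
  rw [Finset.sum_range_add] at hS
  refine hS.trans ?_
  rw [add_mul]
  refine add_le_add ?_ ?_
  · rw [← Finset.sum_range_reflect]
    have hg : ∑ i ∈ Finset.range n, ((1:ℝ) / 2) ^ (i + 1) ≤ 1 := by
      have : ∀ n : ℕ, ∑ i ∈ Finset.range n, ((1:ℝ) / 2) ^ (i + 1) = 1 - (1 / 2) ^ n := by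
        intro n
        induction n with
        | zero => simp
        | succ n ih => rw [Finset.sum_range_succ, ih]; ring
      rw [this]
      have : (0:ℝ) < (1 / 2) ^ n := by positivity
      linarith
    calc _ ≤ ∑ i ∈ Finset.range n, C1 * τ n * (1 / 2) ^ (i + 1) := by
          refine Finset.sum_le_sum fun i hi => ?_
          have hi := Finset.mem_range.1 hi
          have e : n - 1 - i + i + 1 = n := by omega
          have := hF1 (n - 1 - i) i k (by rwa [e])
          rw [e] at this
          linarith
      _ = C1 * τ n * ∑ i ∈ Finset.range n, ((1:ℝ) / 2) ^ (i + 1) := by rw [Finset.mul_sum]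
      _ ≤ C1 * τ n * 1 := by
          gcongr
          exact mul_nonneg hC1 (h0 _)
      _ = _ := by ring
  · refine le_trans (Finset.sum_le_sum fun i _ => ?_) (hF2 n N)
    exact mul_le_of_le_one_right (h0 _) (pow_le_one₀ (rr_nonneg _) (rr_lt_one _).le)

lemma sum_rpow_le {δ : ℝ} (h0 : 0 < δ) (h1 : δ ≤ 1) (N : ℕ) :
    ∑ k ∈ Finset.range N, ((k:ℝ) + 1) ^ (δ - 1) ≤ (N:ℝ) ^ δ / δ := by
  induction N with
  | zero => simp [Real.zero_rpow h0.ne']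
  | succ N ih =>
    rw [Finset.sum_range_succ]
    have hN : (0:ℝ) < N + 1 := by positivity
    have key : (N:ℝ) ^ δ ≤ ((N:ℝ) + 1) ^ δ - δ * ((N:ℝ) + 1) ^ (δ - 1) := by
      have hb := rpow_one_add_le_one_add_mul_self (s := -(1 / ((N:ℝ) + 1))) (by
        rw [neg_le_neg_iff, div_le_one hN]; linarith [Nat.cast_nonneg (α := ℝ) N]) h0.le h1
      have e : (N:ℝ) = (N + 1) * (1 + -(1 / ((N:ℝ) + 1))) := by field_simp; ring
      have hp : 0 ≤ 1 + -(1 / ((N:ℝ) + 1)) := by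
        have : 1 / ((N:ℝ) + 1) ≤ 1 := by
          rw [div_le_one hN]; linarith [Nat.cast_nonneg (α := ℝ) N]
        linarith
      have e2 : (N:ℝ) ^ δ = (N + 1) ^ δ * (1 + -(1 / ((N:ℝ) + 1))) ^ δ := by
        rw [← Real.mul_rpow hN.le hp, ← e]
      rw [e2, Real.rpow_sub_one hN.ne']
      calc _ ≤ ((N:ℝ) + 1) ^ δ * (1 + δ * -(1 / ((N:ℝ) + 1))) := by gcongr
        _ = _ := by ring
    push_cast
    rw [le_div_iff₀ h0] at ih ⊢
    nlinarith

lemma sumE {δ : ℝ} (h0 : 0 < δ) (h1 : δ ≤ 1) (j : ℕ) :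
    ∑' k : ℕ, ENNReal.ofReal (rr (j + 1) ^ k * ((k:ℝ) + 1) ^ (δ - 1)) ≤
      ENNReal.ofReal ((1 / δ + 2) * ((2:ℝ) ^ j) ^ δ) := by
  refine ENNReal.tsum_le_of_sum_range_le fun K => ?_
  have hr := rr_nonneg (j + 1)
  rw [← ENNReal.ofReal_sum_of_nonneg (fun j _ => by positivity)]
  apply ENNReal.ofReal_le_ofReal
  have hA := sum_rpow_le h0 h1 (2 ^ j)
  have hterm : ∀ k ∈ Finset.range K, rr (j + 1) ^ k * ((k:ℝ) + 1) ^ (δ - 1) ≤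
      (if k < 2 ^ j then ((k:ℝ) + 1) ^ (δ - 1) else 0) + ((2:ℝ) ^ j) ^ (δ - 1) * rr (j + 1) ^ k := by
    intro k _
    split_ifs with h
    · have : rr (j + 1) ^ k * ((k:ℝ) + 1) ^ (δ - 1) ≤ ((k:ℝ) + 1) ^ (δ - 1) :=
        mul_le_of_le_one_left (by positivity) (pow_le_one₀ hr (rr_lt_one _).le)
      have : 0 ≤ ((2:ℝ) ^ j) ^ (δ - 1) * rr (j + 1) ^ k := by positivity
      linarith
    · rw [zero_add, mul_comm]
      gcongr ?_ * _
      apply Real.rpow_le_rpow_of_nonpos (by positivity) _ (by linarith)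
      have : (2 ^ j : ℕ) ≤ k := not_lt.1 h
      have : ((2 ^ j : ℕ) : ℝ) ≤ k := by exact_mod_cast this
      push_cast at this; linarith
  refine (Finset.sum_le_sum hterm).trans ?_
  rw [Finset.sum_add_distrib, add_mul]
  refine add_le_add ?_ ?_
  · rw [← Finset.sum_filter]
    refine le_trans (Finset.sum_le_sum_of_subset_of_nonneg (t := Finset.range (2 ^ j)) ?_
      (fun _ _ _ => by positivity)) (hA.trans (le_of_eq ?_))
    · intro k hk; simp at hk ⊢; exact hk.2
    · push_cast; ring
  · rw [← Finset.mul_sum]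
    have hg : ∑ k ∈ Finset.range K, rr (j + 1) ^ k ≤ 2 * 2 ^ j := by
      have h2 := (summable_geometric_of_lt_one hr (rr_lt_one _)).sum_le_tsum (Finset.range K) (fun _ _ => by positivity)
      rw [tsum_geometric_of_lt_one hr (rr_lt_one _)] at h2
      refine h2.trans (le_of_eq ?_)
      unfold rr
      rw [sub_sub_cancel, pow_succ, div_pow, one_pow]
      field_simp
    rw [Real.rpow_sub_one (by positivity)]
    calc _ ≤ ((2:ℝ) ^ j) ^ δ / 2 ^ j * (2 * 2 ^ j) := by gcongr
      _ = _ := by field_simp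

lemma holder_tsum {p : ℝ} (hp : 1 ≤ p) (w f : ℕ → ENNReal) :
    (∑' k, w k * f k) ^ p ≤ (∑' k, w k) ^ (p - 1) * ∑' k, w k * f k ^ p := by
  have hp0 : 0 < p := by linarith
  have h : ∑' k, w k * f k ≤ (∑' k, w k) ^ (1 - p⁻¹) * (∑' k, w k * f k ^ p) ^ p⁻¹ := by
    rw [ENNReal.tsum_eq_iSup_sum (f := fun k => w k * f k)]
    refine iSup_le fun s => ?_
    refine (ENNReal.inner_le_weight_mul_Lp_of_nonneg s hp w f).trans ?_
    have : p⁻¹ ≤ 1 := inv_le_one_of_one_le₀ hp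
    gcongr
    · exact ENNReal.sum_le_tsum s
    · exact ENNReal.sum_le_tsum s
  calc _ ≤ ((∑' k, w k) ^ (1 - p⁻¹) * (∑' k, w k * f k ^ p) ^ p⁻¹) ^ p := by gcongr
    _ = _ := by
      rw [ENNReal.mul_rpow_of_nonneg _ _ hp0.le, ← ENNReal.rpow_mul, ← ENNReal.rpow_mul,
        inv_mul_cancel₀ hp0.ne', ENNReal.rpow_one, sub_mul, inv_mul_cancel₀ hp0.ne', one_mul]

/-- mass of the dyadic ring -/
def ringM (ω : ℝ → ℝ) (j : ℕ) : ENNReal := ∫⁻ x in Ico (rr j) (rr (j + 1)), ENNReal.ofReal (ω x)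

lemma tail_ofReal {ω : ℝ → ℝ} (hω : IsRadialWeight ω) (j : ℕ) :
    ENNReal.ofReal (tailInt ω (rr j)) = ∫⁻ x in Ico (rr j) 1, ENNReal.ofReal (ω x) := by
  unfold tailInt
  rw [ofReal_integral_eq_lintegral_ofReal, setLIntegral_congr Ioo_ae_eq_Ico]
  · exact hω.2.2.1.mono_set (Ioo_subset_Ioo_left (rr_nonneg j))
  · exact Filter.Eventually.of_forall hω.2.1

lemma tail_step {ω : ℝ → ℝ} (hω : IsRadialWeight ω) (j : ℕ) :
    ENNReal.ofReal (tailInt ω (rr j)) = ringM ω j + ENNReal.ofReal (tailInt ω (rr (j + 1))) := by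
  rw [tail_ofReal hω, tail_ofReal hω, ringM, ← lintegral_union measurableSet_Ico,
    Ico_union_Ico_eq_Ico (rr_mono (Nat.le_succ j)) (rr_lt_one _).le]
  rw [Set.disjoint_left]
  intro x hx hx'
  exact absurd hx.2 (not_lt.2 hx'.1)

lemma tail_steps {ω : ℝ → ℝ} (hω : IsRadialWeight ω) (j m : ℕ) :
    ENNReal.ofReal (tailInt ω (rr j)) =
      ∑ i ∈ Finset.range m, ringM ω (j + i) + ENNReal.ofReal (tailInt ω (rr (j + m))) := by
  induction m with
  | zero => simp
  | succ m ih => rw [ih, tail_step hω (j + m), Finset.sum_range_succ, add_assoc, ← add_assoc j,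
      add_assoc (∑ i ∈ Finset.range m, ringM ω (j + i))]

lemma tail_pos {ω : ℝ → ℝ} (hω : IsRadialWeight ω) (j : ℕ) : 0 < tailInt ω (rr j) :=
  hω.2.2.2 _ ⟨rr_nonneg j, rr_lt_one j⟩

lemma tail_anti {ω : ℝ → ℝ} (hω : IsRadialWeight ω) {a b : ℝ} (ha : 0 ≤ a) (hab : a ≤ b) :
    tailInt ω b ≤ tailInt ω a := by
  unfold tailInt
  apply setIntegral_mono_set
  · exact hω.2.2.1.mono_set (Ioo_subset_Ioo_left ha)
  · exact Filter.Eventually.of_forall hω.2.1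
  · exact (Ioo_subset_Ioo_left hab).eventuallyLE

lemma tail_dhat {ω : ℝ → ℝ} (hD : Dhat ω) :
    ∃ D : ℝ, 1 ≤ D ∧ ∀ j, tailInt ω (rr j) ≤ D * tailInt ω (rr (j + 1)) := by
  obtain ⟨C, hC, h⟩ := hD
  refine ⟨C, hC.le, fun j => ?_⟩
  have := h (rr j) ⟨rr_nonneg j, rr_lt_one j⟩
  rwa [show (1 + rr j) / 2 = rr (j + 1) by unfold rr; rw [pow_succ]; ring] at this

lemma tail_dcheck {ω : ℝ → ℝ} (hω : IsRadialWeight ω) (hD : Dcheck ω) :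
    ∃ m : ℕ, 0 < m ∧ ∃ q : ℝ, 0 < q ∧ q < 1 ∧ ∀ j, tailInt ω (rr (j + m)) ≤ q * tailInt ω (rr j) := by
  obtain ⟨K, hK, C, hC, h⟩ := hD
  obtain ⟨m, hm⟩ := pow_unbounded_of_one_lt K (by norm_num : (1:ℝ) < 2)
  have hK0 : 0 < K := by linarith
  refine ⟨m, ?_, C⁻¹, by positivity, inv_lt_one_of_one_lt₀ hC, fun j => ?_⟩
  · rcases Nat.eq_zero_or_pos m with rfl | h
    · simp at hm; linarith
    · exact h
  have h1 := h (rr j) ⟨rr_nonneg j, rr_lt_one j⟩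
  have h2 : tailInt ω (rr (j + m)) ≤ tailInt ω (1 - (1 - rr j) / K) := by
    apply tail_anti hω
    · have := rr_nonneg j
      have : (1 - rr j) / K ≤ 1 := by rw [div_le_one hK0]; linarith
      linarith
    · unfold rr
      rw [sub_sub_cancel, pow_add]
      have : ((1:ℝ) / 2) ^ m ≤ 1 / K := by
        rw [div_pow, one_pow]; gcongr
      have : ((1:ℝ) / 2) ^ j * (1 / 2) ^ m ≤ (1 / 2) ^ j * (1 / K) := by gcongr
      rw [mul_one_div] at this
      linarith
  rw [inv_mul_eq_div, le_div_iff₀ (by linarith)]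
  calc _ ≤ tailInt ω (1 - (1 - rr j) / K) * C := by gcongr
    _ ≤ _ := by linarith

lemma iUnion_rr : ⋃ j, Ico (rr j) (rr (j + 1)) = Ico (0:ℝ) 1 := by
  ext x
  simp only [mem_iUnion, mem_Ico]
  constructor
  · rintro ⟨j, h1, h2⟩
    exact ⟨(rr_nonneg j).trans h1, h2.trans (rr_lt_one _)⟩
  · rintro ⟨h0, h1⟩
    have hex : ∃ j, x < rr j := by
      obtain ⟨j, hj⟩ := exists_pow_lt_of_lt_one (sub_pos.2 h1) (by norm_num : (1:ℝ) / 2 < 1)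
      exact ⟨j, by unfold rr; linarith⟩
    classical
    have hs := Nat.find_spec hex
    have hne : Nat.find hex ≠ 0 := by
      intro h
      rw [h, rr_zero] at hs
      linarith
    obtain ⟨i, hi⟩ := Nat.exists_eq_succ_of_ne_zero hne
    refine ⟨i, ?_, ?_⟩
    · exact not_lt.1 (Nat.find_min hex (by omega))
    · rw [hi] at hs; exact hs

lemma disj_rr : Pairwise (Function.onFun Disjoint fun j => Ico (rr j) (rr (j + 1))) :=
  rr_mono.pairwise_disjoint_on_Ico_succ

lemma lint_split {F : ℝ → ENNReal} :
    ∫⁻ x in Ioo (0:ℝ) 1, F x = ∑' j, ∫⁻ x in Ico (rr j) (rr (j + 1)), F x := by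
  rw [setLIntegral_congr Ioo_ae_eq_Ico, ← iUnion_rr,
    lintegral_iUnion (fun _ => measurableSet_Ico) disj_rr]

lemma lint_upper {ω : ℝ → ℝ} (hω : IsRadialWeight ω) {G : ℝ → ENNReal}
    (hG : MonotoneOn G (Ico 0 1)) :
    ∫⁻ x in Ioo (0:ℝ) 1, G x * ENNReal.ofReal (ω x) ≤
      ∑' j, G (rr (j + 1)) * ENNReal.ofReal (tailInt ω (rr j)) := by
  rw [lint_split]
  refine ENNReal.tsum_le_tsum fun j => ?_
  calc _ ≤ ∫⁻ x in Ico (rr j) (rr (j + 1)), G (rr (j + 1)) * ENNReal.ofReal (ω x) := by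
        refine setLIntegral_mono' measurableSet_Ico fun x hx => ?_
        gcongr
        exact hG ⟨(rr_nonneg j).trans hx.1, hx.2.trans (rr_lt_one _)⟩ ⟨rr_nonneg _, rr_lt_one _⟩ hx.2.le
    _ = G (rr (j + 1)) * ringM ω j := by
        rw [lintegral_const_mul _ hω.1.ennreal_ofReal, ringM]
    _ ≤ _ := by
        gcongr
        rw [tail_step hω]
        exact le_self_add

lemma lint_lower {ω : ℝ → ℝ} (hω : IsRadialWeight ω) {G : ℝ → ENNReal}
    (hG : MonotoneOn G (Ico 0 1)) :
    ∑' j, G (rr j) * ringM ω j ≤ ∫⁻ x in Ioo (0:ℝ) 1, G x * ENNReal.ofReal (ω x) := by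
  rw [lint_split]
  refine ENNReal.tsum_le_tsum fun j => ?_
  rw [ringM, ← lintegral_const_mul _ hω.1.ennreal_ofReal]
  refine setLIntegral_mono' measurableSet_Ico fun x hx => ?_
  gcongr
  exact hG ⟨rr_nonneg _, rr_lt_one _⟩ ⟨(rr_nonneg j).trans hx.1, hx.2.trans (rr_lt_one _)⟩ hx.1

lemma lint_lower' {ω : ℝ → ℝ} (hω : IsRadialWeight ω) {m : ℕ} {q : ℝ} (hq : q < 1)
    (h : ∀ j, tailInt ω (rr (j + m)) ≤ q * tailInt ω (rr j)) {G : ℝ → ENNReal}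
    (hG : MonotoneOn G (Ico 0 1)) :
    ∑' j, G (rr j) * ENNReal.ofReal (tailInt ω (rr j)) ≤
      ENNReal.ofReal (m / (1 - q)) * ∫⁻ x in Ioo (0:ℝ) 1, G x * ENNReal.ofReal (ω x) := by
  have h1q : 0 < 1 - q := by linarith
  have ht : ∀ j, ENNReal.ofReal (tailInt ω (rr j)) ≤
      ENNReal.ofReal (1 / (1 - q)) * ∑ i ∈ Finset.range m, ringM ω (j + i) := by
    intro j
    have e : ∑ i ∈ Finset.range m, ringM ω (j + i) =
        ENNReal.ofReal (tailInt ω (rr j) - tailInt ω (rr (j + m))) := by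
      rw [ENNReal.ofReal_sub _ (tail_pos hω _).le, tail_steps hω j m,
        ENNReal.add_sub_cancel_right ENNReal.ofReal_ne_top]
    rw [e, ← ENNReal.ofReal_mul (by positivity)]
    apply ENNReal.ofReal_le_ofReal
    rw [one_div, inv_mul_eq_div, le_div_iff₀ h1q]
    linarith [h j]
  calc _ ≤ ∑' j, G (rr j) * (ENNReal.ofReal (1 / (1 - q)) * ∑ i ∈ Finset.range m, ringM ω (j + i)) := by
        refine ENNReal.tsum_le_tsum fun j => ?_
        gcongr
        exact ht j
    _ ≤ ∑' j, ENNReal.ofReal (1 / (1 - q)) * ∑ i ∈ Finset.range m, G (rr (j + i)) * ringM ω (j + i) := by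
        refine ENNReal.tsum_le_tsum fun j => ?_
        rw [mul_left_comm, Finset.mul_sum]
        gcongr with i hi
        exact hG ⟨rr_nonneg _, rr_lt_one _⟩ ⟨rr_nonneg _, rr_lt_one _⟩ (rr_mono (by omega))
    _ = ENNReal.ofReal (1 / (1 - q)) * ∑ i ∈ Finset.range m, ∑' j, G (rr (j + i)) * ringM ω (j + i) := by
        rw [ENNReal.tsum_mul_left, Summable.tsum_finsetSum (fun _ _ => ENNReal.summable)]
    _ ≤ ENNReal.ofReal (1 / (1 - q)) * ∑ i ∈ Finset.range m, ∑' j, G (rr j) * ringM ω j := by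
        refine mul_le_mul' le_rfl (Finset.sum_le_sum fun i _ => ?_)
        exact ENNReal.tsum_comp_le_tsum_of_injective (add_left_injective i) (fun j => G (rr j) * ringM ω j)
    _ = ENNReal.ofReal (m / (1 - q)) * ∑' j, G (rr j) * ringM ω j := by
        rw [Finset.sum_const, Finset.card_range, nsmul_eq_mul, ← mul_assoc, ← ENNReal.ofReal_natCast,
          ← ENNReal.ofReal_mul (by positivity)]
        congr 2
        ring
    _ ≤ _ := by
        gcongr
        exact lint_lower hω hG

lemma pow_monoOn (k : ℕ) : MonotoneOn (fun r : ℝ => ENNReal.ofReal (r ^ k)) (Ico 0 1) := by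
  intro x hx y hy hxy
  apply ENNReal.ofReal_le_ofReal
  exact pow_le_pow_left₀ hx.1 hxy k

lemma moment_nonneg {ω : ℝ → ℝ} (hω : IsRadialWeight ω) (k : ℕ) : 0 ≤ momentW ω k := by
  apply setIntegral_nonneg measurableSet_Ioo
  intro x hx
  exact mul_nonneg (Real.rpow_nonneg hx.1.le _) (hω.2.1 x)

lemma moment_ofReal {ω : ℝ → ℝ} (hω : IsRadialWeight ω) (k : ℕ) :
    ENNReal.ofReal (momentW ω k) = ∫⁻ x in Ioo (0:ℝ) 1, ENNReal.ofReal (x ^ k) * ENNReal.ofReal (ω x) := by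
  unfold momentW
  simp only [Real.rpow_natCast]
  rw [ofReal_integral_eq_lintegral_ofReal]
  · refine setLIntegral_congr_fun measurableSet_Ioo fun x hx => ?_
    exact ENNReal.ofReal_mul (pow_nonneg hx.1.le _)
  · refine Integrable.mono hω.2.2.1 ?_ ?_
    · exact ((measurable_id.pow_const k).mul hω.1).aestronglyMeasurable
    · refine (ae_restrict_iff' measurableSet_Ioo).2 (Filter.Eventually.of_forall fun x hx => ?_)
      rw [norm_mul]
      apply mul_le_of_le_one_left (norm_nonneg _)
      rw [norm_pow, Real.norm_of_nonneg hx.1.le]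
      exact pow_le_one₀ hx.1.le hx.2.le
  · refine (ae_restrict_iff' measurableSet_Ioo).2 (Filter.Eventually.of_forall fun x hx => ?_)
    exact mul_nonneg (pow_nonneg hx.1.le _) (hω.2.1 x)

lemma log_le (k : ℕ) : 2 ^ (Nat.log 2 (k + 1)) ≤ k + 1 := Nat.pow_log_le_self 2 (by omega)

lemma moment_bounds {ω : ℝ → ℝ} (hω : IsRadialWeight ω) (hD : Dclass ω) :
    ∃ c : ℝ, 0 < c ∧ ∀ k : ℕ, tailInt ω (rr (Nat.log 2 (k + 1))) ≤ c * momentW ω k ∧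
      momentW ω k ≤ c * tailInt ω (rr (Nat.log 2 (k + 1))) := by
  obtain ⟨D, hD1, hDt⟩ := tail_dhat hD.1
  obtain ⟨m, hm, q, hq0, hq1, hq⟩ := tail_dcheck hω hD.2
  obtain ⟨C, hC, hF⟩ := geomF (fun j => (tail_pos hω j).le) hD1 hDt
    (fun j => (tail_anti hω (rr_nonneg j) (rr_mono (Nat.le_succ j))).trans
      (le_mul_of_one_le_left (tail_pos hω j).le hD1)) hq1 hq
  have h1q : 0 < 1 - q := by linarith
  refine ⟨max (4 * D * (m / (1 - q))) C, lt_max_of_lt_left (by positivity), fun k => ⟨?_, ?_⟩⟩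
  · set n := Nat.log 2 (k + 1) with hn
    have h1 := lint_lower' hω hq1 hq (pow_monoOn k)
    rw [← moment_ofReal hω, ← ENNReal.ofReal_mul (by positivity)] at h1
    have h2 := (ENNReal.le_tsum (n + 1)).trans h1
    rw [← ENNReal.ofReal_mul (pow_nonneg (rr_nonneg _) _), ENNReal.ofReal_le_ofReal_iff
      (mul_nonneg (by positivity) (moment_nonneg hω k))] at h2
    have h3 : k + 1 < 2 ^ (n + 1) := Nat.lt_pow_succ_log_self (by norm_num) _
    have h4 := rr_pow_ge (n := n) (k := k) (by omega)
    have h5 := hDt n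
    have h6 : 1 / 4 * tailInt ω (rr (n + 1)) ≤ m / (1 - q) * momentW ω k :=
      le_trans (mul_le_mul_of_nonneg_right h4 (tail_pos hω _).le) h2
    calc _ ≤ D * tailInt ω (rr (n + 1)) := h5
      _ = 4 * D * (1 / 4 * tailInt ω (rr (n + 1))) := by ring
      _ ≤ 4 * D * (m / (1 - q) * momentW ω k) := by gcongr
      _ = (4 * D * (m / (1 - q))) * momentW ω k := by ring
      _ ≤ _ := mul_le_mul_of_nonneg_right (le_max_left _ _) (moment_nonneg hω k)
  · have h1 := lint_upper hω (pow_monoOn k)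
    rw [← moment_ofReal hω] at h1
    have h2 := hF (Nat.log 2 (k + 1)) k (log_le k)
    have h3 : ENNReal.ofReal (momentW ω k) ≤ ENNReal.ofReal (C * tailInt ω (rr (Nat.log 2 (k + 1)))) := by
      refine h1.trans (le_trans (le_of_eq ?_) h2)
      refine tsum_congr fun j => ?_
      rw [mul_comm, ENNReal.ofReal_mul (tail_pos hω j).le]
    rw [ENNReal.ofReal_le_ofReal_iff (mul_nonneg hC (tail_pos hω _).le)] at h3
    exact h3.trans (mul_le_mul_of_nonneg_right (le_max_right _ _) (tail_pos hω _).le)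

lemma exists_delta {m : ℕ} {q : ℝ} (hq0 : 0 < q) (hq1 : q < 1) :
    ∃ δ : ℝ, 0 < δ ∧ δ ≤ 1 ∧ ((2:ℝ) ^ δ) ^ m * q < 1 := by
  obtain ⟨L, hL⟩ := exists_pow_lt_of_lt_one (by positivity : (0:ℝ) < (1 / 2) ^ m) hq1
  refine ⟨1 / ((L:ℝ) + 1), by positivity, ?_, ?_⟩
  · rw [div_le_one (by positivity)]; linarith [Nat.cast_nonneg (α := ℝ) L]
  · have h : (((2:ℝ) ^ (1 / ((L:ℝ) + 1))) ^ m * q) ^ (L + 1) < 1 := by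
      have e : ((2:ℝ) ^ (1 / ((L:ℝ) + 1))) ^ (L + 1) = 2 := by
        rw [← Real.rpow_natCast, ← Real.rpow_mul (by norm_num)]
        push_cast
        rw [one_div, inv_mul_cancel₀ (by positivity), Real.rpow_one]
      rw [mul_pow, ← pow_mul, mul_comm m, pow_mul, e, pow_succ]
      calc (2:ℝ) ^ m * (q ^ L * q) ≤ 2 ^ m * (q ^ L * 1) := by gcongr
        _ < 2 ^ m * ((1 / 2) ^ m * 1) := by gcongr
        _ = 1 := by rw [mul_one, ← mul_pow]; norm_num
    by_contra hc
    exact absurd h (not_lt.2 (one_le_pow₀ (not_lt.1 hc)))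

/-- the coefficient term -/
def yy (p : ℝ) (f : ℂ → ℂ) (k : ℕ) : ℝ := ‖coefF f k‖ ^ p * ((k : ℝ) + 1) ^ (p - 1)

lemma yy_nonneg (p : ℝ) (f : ℂ → ℂ) (k : ℕ) : 0 ≤ yy p f k := by unfold yy; positivity

lemma minfp_mono {p : ℝ} (hp : 0 ≤ p) {f : ℂ → ℂ} (hf : DifferentiableOn ℂ f (ball (0:ℂ) 1)) :
    MonotoneOn (fun r : ℝ => ENNReal.ofReal (Minf f r ^ p)) (Ico 0 1) := by
  intro x hx y hy hxy
  apply ENNReal.ofReal_le_ofReal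
  exact Real.rpow_le_rpow minf_nonneg (minf_mono hf hx.1 hxy hy.2) hp

lemma minf_holder {p : ℝ} (hp : 1 ≤ p) {δ : ℝ} (h0 : 0 < δ) (h1 : δ ≤ 1) {f : ℂ → ℂ}
    (hf : DifferentiableOn ℂ f (ball (0:ℂ) 1)) (j : ℕ) :
    ENNReal.ofReal (Minf f (rr (j + 1)) ^ p) ≤
      ENNReal.ofReal ((1 / δ + 2) ^ (p - 1) * (((2:ℝ) ^ δ) ^ (p - 1)) ^ j) *
      ∑' k : ℕ, ENNReal.ofReal (rr (j + 1) ^ k *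
        (((k:ℝ) + 1) ^ (δ - 1) * (‖coefF f k‖ * ((k:ℝ) + 1) ^ (1 - δ)) ^ p)) := by
  have hr := rr_nonneg (j + 1)
  have hp0 : 0 ≤ p := by linarith
  have hM : ENNReal.ofReal (Minf f (rr (j + 1))) ≤
      ∑' k : ℕ, ENNReal.ofReal (rr (j + 1) ^ k * ((k:ℝ) + 1) ^ (δ - 1)) *
        ENNReal.ofReal (‖coefF f k‖ * ((k:ℝ) + 1) ^ (1 - δ)) := by
    refine (ENNReal.ofReal_le_ofReal (minf_le_tsum hf hr (rr_lt_one _))).trans (le_of_eq ?_)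
    rw [ENNReal.ofReal_tsum_of_nonneg (fun k => by positivity) (coef_summable hf hr (rr_lt_one _))]
    refine tsum_congr fun k => ?_
    rw [← ENNReal.ofReal_mul (by positivity)]
    congr 1
    have : ((k:ℝ) + 1) ^ (δ - 1) * ((k:ℝ) + 1) ^ (1 - δ) = 1 := by
      rw [← Real.rpow_add (by positivity)]; simp
    calc ‖coefF f k‖ * rr (j + 1) ^ k = ‖coefF f k‖ * rr (j + 1) ^ k * (((k:ℝ) + 1) ^ (δ - 1) * ((k:ℝ) + 1) ^ (1 - δ)) := by rw [this, mul_one]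
      _ = _ := by ring
  rw [← ENNReal.ofReal_rpow_of_nonneg minf_nonneg hp0]
  refine (ENNReal.rpow_le_rpow hM hp0).trans ((holder_tsum hp _ _).trans ?_)
  refine mul_le_mul' ?_ (le_of_eq ?_)
  · refine (ENNReal.rpow_le_rpow (sumE h0 h1 j) (by linarith)).trans (le_of_eq ?_)
    rw [ENNReal.ofReal_rpow_of_nonneg (by positivity) (by linarith),
      Real.mul_rpow (by positivity) (by positivity)]
    congr 2
    simp only [← Real.rpow_natCast, ← Real.rpow_mul (by norm_num : (0:ℝ) ≤ 2)]
    congr 1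
    ring
  · refine tsum_congr fun k => ?_
    rw [ENNReal.ofReal_rpow_of_nonneg (by positivity) hp0, ← ENNReal.ofReal_mul (by positivity), mul_assoc]

lemma upper_bound {p : ℝ} (hp1 : 1 ≤ p) (hp2 : p ≤ 2) {ω : ℝ → ℝ} (hω : IsRadialWeight ω)
    (hD : Dclass ω) : ∃ C : ℝ, 0 < C ∧ ∀ f : ℂ → ℂ, DifferentiableOn ℂ f (ball (0:ℂ) 1) →
      ∫⁻ x in Ioo (0:ℝ) 1, ENNReal.ofReal (Minf f x ^ p) * ENNReal.ofReal (ω x) ≤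
        ENNReal.ofReal C * ∑' k : ℕ, ENNReal.ofReal (yy p f k * momentW ω k) := by
  obtain ⟨D, hD1, hDt⟩ := tail_dhat hD.1
  obtain ⟨m, hm, q, hq0, hq1, hq⟩ := tail_dcheck hω hD.2
  obtain ⟨δ, hδ0, hδ1, hδ⟩ := exists_delta (m := m) hq0 hq1
  obtain ⟨c, hc, hmom⟩ := moment_bounds hω hD
  set l : ℝ := ((2:ℝ) ^ δ) ^ (p - 1) with hl
  have h2δ : 1 ≤ (2:ℝ) ^ δ := Real.one_le_rpow (by norm_num) hδ0.le
  have hl1 : 1 ≤ l := Real.one_le_rpow h2δ (by linarith)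
  have hl2 : l ≤ 2 ^ δ := by
    calc l ≤ ((2:ℝ) ^ δ) ^ (1:ℝ) := Real.rpow_le_rpow_of_exponent_le h2δ (by linarith)
      _ = _ := Real.rpow_one _
  have ht0 := fun j => tail_pos hω j
  obtain ⟨C, hC, hF⟩ := geomF (τ := fun j => l ^ j * tailInt ω (rr j)) (D := D * l) (m := m)
    (q := l ^ m * q)
    (fun j => mul_nonneg (by positivity) (ht0 j).le) (by nlinarith)
    (fun j => by
      have h1 := hDt j
      have h2 : l ^ j ≤ l ^ (j + 1) := pow_le_pow_right₀ hl1 (by omega)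
      calc l ^ j * tailInt ω (rr j) ≤ l ^ (j + 1) * (D * tailInt ω (rr (j + 1))) := by
            gcongr
            exact (ht0 _).le
        _ = 1 * (D * (l ^ (j + 1) * tailInt ω (rr (j + 1)))) := by ring
        _ ≤ l * (D * (l ^ (j + 1) * tailInt ω (rr (j + 1)))) := by
            have := ht0 (j + 1)
            gcongr
        _ = _ := by ring)
    (fun j => by
      have h1 := tail_anti hω (rr_nonneg j) (rr_mono (Nat.le_succ j))
      have h0 := ht0 j
      calc l ^ (j + 1) * tailInt ω (rr (j + 1)) ≤ l ^ (j + 1) * tailInt ω (rr j) := by gcongr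
        _ = 1 * (l * (l ^ j * tailInt ω (rr j))) := by ring
        _ ≤ D * (l * (l ^ j * tailInt ω (rr j))) := by gcongr
        _ = _ := by ring)
    (by
      refine lt_of_le_of_lt ?_ hδ
      gcongr)
    (fun j => by
      calc l ^ (j + m) * tailInt ω (rr (j + m)) ≤ l ^ (j + m) * (q * tailInt ω (rr j)) := by
            gcongr
            exact hq j
        _ = _ := by ring)
  set E : ℝ := (1 / δ + 2) ^ (p - 1) with hE
  have hE0 : 0 < E := by positivity
  refine ⟨E * ((C + 1) * c), by positivity, fun f hf => ?_⟩
  refine (lint_upper hω (minfp_mono (by linarith) hf)).trans ?_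
  set x : ℕ → ℝ := fun k => ((k:ℝ) + 1) ^ (δ - 1) * (‖coefF f k‖ * ((k:ℝ) + 1) ^ (1 - δ)) ^ p with hx
  have hx0 : ∀ k, 0 ≤ x k := fun k => by positivity
  calc _ ≤ ∑' j, ∑' k, ENNReal.ofReal E * (ENNReal.ofReal (x k) *
            ENNReal.ofReal (l ^ j * tailInt ω (rr j) * rr (j + 1) ^ k)) := by
        refine ENNReal.tsum_le_tsum fun j => ?_
        refine (mul_le_mul' (minf_holder hp1 hδ0 hδ1 hf j) le_rfl).trans (le_of_eq ?_)
        rw [mul_right_comm, ← ENNReal.tsum_mul_left]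
        refine tsum_congr fun k => ?_
        have := ht0 j
        have := rr_nonneg (j + 1)
        have := hx0 k
        rw [← ENNReal.ofReal_mul (by positivity), ← ENNReal.ofReal_mul (by positivity),
          ← ENNReal.ofReal_mul (by positivity), ← ENNReal.ofReal_mul (by positivity)]
        congr 1
        simp only [hx]
        ring
    _ = ENNReal.ofReal E * ∑' k, ENNReal.ofReal (x k) *
          ∑' j, ENNReal.ofReal (l ^ j * tailInt ω (rr j) * rr (j + 1) ^ k) := by
        rw [ENNReal.tsum_comm]
        simp only [ENNReal.tsum_mul_left]
    _ ≤ ENNReal.ofReal E * ∑' k, ENNReal.ofReal ((C + 1) * c) * ENNReal.ofReal (yy p f k * momentW ω k) := by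
        refine mul_le_mul' le_rfl (ENNReal.tsum_le_tsum fun k => ?_)
        refine (mul_le_mul' le_rfl (hF _ k (log_le k))).trans ?_
        rw [← ENNReal.ofReal_mul (hx0 k), ← ENNReal.ofReal_mul (by positivity)]
        apply ENNReal.ofReal_le_ofReal
        set n := Nat.log 2 (k + 1)
        have hk1 : (0:ℝ) < (k:ℝ) + 1 := by positivity
        have hln : l ^ n ≤ (((k:ℝ) + 1) ^ δ) ^ (p - 1) := by
          have e : l ^ n = (((2:ℝ) ^ n) ^ δ) ^ (p - 1) := by
            rw [hl]
            simp only [← Real.rpow_natCast, ← Real.rpow_mul (by norm_num : (0:ℝ) ≤ 2)]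
            congr 1
            ring
          rw [e]
          have h2 : (2:ℝ) ^ n ≤ (k:ℝ) + 1 := by exact_mod_cast log_le k
          refine Real.rpow_le_rpow (by positivity) ?_ (by linarith)
          exact Real.rpow_le_rpow (by positivity) h2 hδ0.le
        have hxy : x k * (((k:ℝ) + 1) ^ δ) ^ (p - 1) = yy p f k := by
          simp only [hx, yy]
          rw [Real.mul_rpow (by positivity) (by positivity), ← Real.rpow_mul hk1.le, ← Real.rpow_mul hk1.le]
          have : ((k:ℝ) + 1) ^ (p - 1) = ((k:ℝ) + 1) ^ (δ - 1) * ((k:ℝ) + 1) ^ ((1 - δ) * p) *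
              ((k:ℝ) + 1) ^ (δ * (p - 1)) := by
            rw [← Real.rpow_add hk1, ← Real.rpow_add hk1]
            congr 1; ring
          rw [this]; ring
        have h3 := (hmom k).1
        have h4 := hx0 k
        have h5 := (ht0 n).le
        have h6 := yy_nonneg p f k
        have h7 := moment_nonneg hω k
        calc x k * (C * (l ^ n * tailInt ω (rr n)))
            ≤ x k * (C * ((((k:ℝ) + 1) ^ δ) ^ (p - 1) * tailInt ω (rr n))) := by gcongr
          _ = C * (x k * (((k:ℝ) + 1) ^ δ) ^ (p - 1)) * tailInt ω (rr n) := by ring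
          _ = C * yy p f k * tailInt ω (rr n) := by rw [hxy]
          _ ≤ (C + 1) * yy p f k * (c * momentW ω k) := by
              gcongr
              linarith
          _ = _ := by ring
    _ = _ := by
        rw [ENNReal.tsum_mul_left, ← mul_assoc, ← ENNReal.ofReal_mul hE0.le]

lemma block {p : ℝ} (hp1 : 1 ≤ p) (hp2 : p ≤ 2) {f : ℂ → ℂ}
    (hf : DifferentiableOn ℂ f (ball (0:ℂ) 1)) (hi : InjOn f (ball (0:ℂ) 1)) (n : ℕ) :
    ∑ k ∈ Finset.Ico (2 ^ n - 1) (2 ^ (n + 1) - 1), yy p f k ≤ 513 * Minf f (rr n) ^ p := by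
  rcases n with _ | n
  · have h1 : ‖coefF f 0‖ ≤ Minf f (rr 0) := by
      have := minf_le hf (rr_nonneg 0) (rr_lt_one 0) (z := 0) (by simp [rr_zero])
      simpa [coefF] using this
    have h2 := Real.rpow_le_rpow (norm_nonneg _) h1 (by linarith : 0 ≤ p)
    have h3 : 0 ≤ Minf f (rr 0) ^ p := Real.rpow_nonneg minf_nonneg _
    simp [yy]
    linarith
  · set r := rr (n + 1) with hr
    have hr0 : 0 < r := by
      have : ((1:ℝ) / 2) ^ (n + 1) < 1 := pow_lt_one₀ (by norm_num) (by norm_num) (by omega)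
      rw [hr]; unfold rr; linarith
    have hr1 : r < 1 := rr_lt_one _
    set M := Minf f r with hM
    have hM0 : 0 < M := by
      rcases (minf_nonneg (f := f) (r := r)).eq_or_lt with h | h
      · exfalso
        have a0 := minf_le hf hr0.le hr1 (z := 0) (by simp [hr0.le])
        have a1 := minf_le hf hr0.le hr1 (z := (r:ℂ)) (by simp [abs_of_pos hr0])
        rw [← h, norm_le_zero_iff] at a0 a1
        have := hi (by simp) (by simp [abs_of_pos hr0, hr1]) (a0.trans a1.symm)
        have : r = 0 := by exact_mod_cast this.symm
        linarith
      · exact h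
    have hA := area_coef hf hi hr0 hr1 (Finset.Ico (2 ^ (n + 1) - 2) (2 ^ (n + 2) - 2))
    have h2n : 2 ≤ 2 ^ (n + 1) := by rw [pow_succ]; have := Nat.one_le_two_pow (n := n); omega
    have h2n' : 2 ^ (n + 2) = 2 * 2 ^ (n + 1) := by ring
    set B := Finset.Ico (2 ^ (n + 1) - 1) (2 ^ (n + 1 + 1) - 1) with hB
    have hA2 : ∑ k ∈ B, (k:ℝ) * ‖coefF f k‖ ^ 2 * r ^ (2 * k) ≤ M ^ 2 := by
      have := Finset.sum_Ico_add' (fun k : ℕ => (k:ℝ) * ‖coefF f k‖ ^ 2 * r ^ (2 * k))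
        (2 ^ (n + 1) - 2) (2 ^ (n + 2) - 2) 1
      rw [show 2 ^ (n + 1) - 2 + 1 = 2 ^ (n + 1) - 1 by omega,
        show 2 ^ (n + 2) - 2 + 1 = 2 ^ (n + 1 + 1) - 1 by
          rw [show n + 1 + 1 = n + 2 by omega]; omega] at this
      rw [hB, ← this]
      refine le_trans (le_of_eq ?_) hA
      refine Finset.sum_congr rfl fun k _ => ?_
      push_cast
      rfl
    have hA3 : ∑ k ∈ B, ((k:ℝ) + 1) * ‖coefF f k‖ ^ 2 ≤ 512 * M ^ 2 := by
      calc _ ≤ ∑ k ∈ B, 512 * ((k:ℝ) * ‖coefF f k‖ ^ 2 * r ^ (2 * k)) := by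
            refine Finset.sum_le_sum fun k hk => ?_
            rw [hB, Finset.mem_Ico] at hk
            have hk1 : 1 ≤ k := by omega
            have hk1' : (1:ℝ) ≤ k := by exact_mod_cast hk1
            have hk2 : k ≤ 2 * 2 ^ (n + 1) := by
              have : 2 ^ (n + 1 + 1) = 2 * 2 ^ (n + 1) := by ring
              omega
            have g1 := rr_pow_ge (n := n) (k := 2 ^ (n + 1)) le_rfl
            have g2 : (1:ℝ) / 256 ≤ r ^ (2 * k) := by
              calc (1:ℝ) / 256 = (1 / 4) ^ 4 := by norm_num
                _ ≤ (r ^ (2 ^ (n + 1))) ^ 4 := by gcongr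
                _ = r ^ (2 ^ (n + 1) * 4) := by rw [← pow_mul]
                _ ≤ _ := pow_le_pow_of_le_one hr0.le hr1.le (by omega)
            calc ((k:ℝ) + 1) * ‖coefF f k‖ ^ 2 ≤ (2 * k) * ‖coefF f k‖ ^ 2 := by gcongr; linarith
              _ = 512 * (k * ‖coefF f k‖ ^ 2 * (1 / 256)) := by ring
              _ ≤ _ := by gcongr
        _ ≤ _ := by rw [← Finset.mul_sum]; gcongr
    have hinv : ∑ k ∈ B, 1 / ((k:ℝ) + 1) ≤ 1 := by
      have : ∀ k ∈ B, 1 / ((k:ℝ) + 1) ≤ 1 / 2 ^ (n + 1) := fun k hk => by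
        rw [hB, Finset.mem_Ico] at hk
        have : 2 ^ (n + 1) ≤ k + 1 := by omega
        have : (2:ℝ) ^ (n + 1) ≤ k + 1 := by exact_mod_cast this
        gcongr
      have h := Finset.sum_le_card_nsmul _ _ _ this
      have hc : B.card = 2 ^ (n + 1) := by
        rw [hB, Nat.card_Ico]
        have : 2 ^ (n + 1 + 1) = 2 * 2 ^ (n + 1) := by ring
        omega
      rw [hc] at h
      refine h.trans (le_of_eq ?_)
      simp
    have hpt : ∀ k ∈ B, yy p f k ≤ M ^ p * (((k:ℝ) + 1) * ‖coefF f k‖ ^ 2 / M ^ 2 + 1 / ((k:ℝ) + 1)) := by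
      intro k _
      set u := ‖coefF f k‖ with hu
      have hu0 : 0 ≤ u := norm_nonneg _
      have hk1 : (0:ℝ) < (k:ℝ) + 1 := by positivity
      set X := ((k:ℝ) + 1) * u ^ 2 / M ^ 2 with hX
      have hX0 : 0 ≤ X := by positivity
      have hY0 : 0 ≤ 1 / ((k:ℝ) + 1) := by positivity
      have hY := Real.geom_mean_le_arith_mean2_weighted (w₁ := p / 2) (w₂ := 1 - p / 2)
        (p₁ := X) (p₂ := 1 / ((k:ℝ) + 1)) (by linarith) (by linarith) hX0 hY0 (by ring)
      have hY2 : X ^ (p / 2) * (1 / ((k:ℝ) + 1)) ^ (1 - p / 2) ≤ X + 1 / ((k:ℝ) + 1) := by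
        refine hY.trans ?_
        nlinarith
      have e : yy p f k = M ^ p * (X ^ (p / 2) * (1 / ((k:ℝ) + 1)) ^ (1 - p / 2)) := by
        have e1 : X ^ (p / 2) = ((k:ℝ) + 1) ^ (p / 2) * u ^ p / M ^ p := by
          rw [hX, Real.div_rpow (by positivity) (by positivity), Real.mul_rpow hk1.le (by positivity)]
          rw [← Real.rpow_natCast u, ← Real.rpow_natCast M, ← Real.rpow_mul hu0, ← Real.rpow_mul hM0.le]
          congr 3 <;> (push_cast; ring)
        have e2 : (1 / ((k:ℝ) + 1)) ^ (1 - p / 2) = ((k:ℝ) + 1) ^ (p / 2 - 1) := by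
          rw [one_div, Real.inv_rpow hk1.le, ← Real.rpow_neg hk1.le]; congr 1; ring
        have e3 : ((k:ℝ) + 1) ^ (p - 1) = ((k:ℝ) + 1) ^ (p / 2) * ((k:ℝ) + 1) ^ (p / 2 - 1) := by
          rw [← Real.rpow_add hk1]; congr 1; ring
        have hMp : M ^ p ≠ 0 := (Real.rpow_pos_of_pos hM0 p).ne'
        rw [e1, e2, yy, e3, ← hu]
        field_simp
      rw [e]
      gcongr
    refine (Finset.sum_le_sum hpt).trans ?_
    rw [← Finset.mul_sum, Finset.sum_add_distrib, ← Finset.sum_div, mul_comm]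
    gcongr
    have : (∑ k ∈ B, ((k:ℝ) + 1) * ‖coefF f k‖ ^ 2) / M ^ 2 ≤ 512 := by
      rw [div_le_iff₀ (by positivity)]; exact hA3
    linarith

lemma lower_bound {p : ℝ} (hp1 : 1 ≤ p) (hp2 : p ≤ 2) {ω : ℝ → ℝ} (hω : IsRadialWeight ω)
    (hD : Dclass ω) : ∃ C : ℝ, 0 < C ∧ ∀ f : ℂ → ℂ, DifferentiableOn ℂ f (ball (0:ℂ) 1) →
      InjOn f (ball (0:ℂ) 1) →
      ∑' k : ℕ, ENNReal.ofReal (yy p f k * momentW ω k) ≤ ENNReal.ofReal C *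
      ∫⁻ x in Ioo (0:ℝ) 1, ENNReal.ofReal (Minf f x ^ p) * ENNReal.ofReal (ω x) := by
  obtain ⟨m, hm, q, hq0, hq1, hq⟩ := tail_dcheck hω hD.2
  obtain ⟨c, hc, hmom⟩ := moment_bounds hω hD
  have h1q : 0 < 1 - q := by linarith
  refine ⟨c * 513 * (m / (1 - q)), by positivity, fun f hf hi => ?_⟩
  have hJ := lint_lower' hω hq1 hq (minfp_mono (p := p) (by linarith) hf)
  calc _ ≤ ∑' k : ℕ, ∑' n : ℕ, if n = Nat.log 2 (k + 1) then
          ENNReal.ofReal (c * tailInt ω (rr n)) * ENNReal.ofReal (yy p f k) else 0 := by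
        refine ENNReal.tsum_le_tsum fun k => ?_
        rw [tsum_ite_eq, ← ENNReal.ofReal_mul (mul_nonneg hc.le (tail_pos hω _).le), mul_comm]
        apply ENNReal.ofReal_le_ofReal
        exact mul_le_mul_of_nonneg_right (hmom k).2 (yy_nonneg _ _ _)
    _ = ∑' n : ℕ, ∑ k ∈ Finset.Ico (2 ^ n - 1) (2 ^ (n + 1) - 1),
          ENNReal.ofReal (c * tailInt ω (rr n)) * ENNReal.ofReal (yy p f k) := by
        rw [ENNReal.tsum_comm]
        refine tsum_congr fun n => ?_
        have hiff : ∀ k, n = Nat.log 2 (k + 1) ↔ k ∈ Finset.Ico (2 ^ n - 1) (2 ^ (n + 1) - 1) := by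
          intro k
          rw [eq_comm, Nat.log_eq_iff (by right; omega), Finset.mem_Ico]
          have := Nat.one_le_two_pow (n := n)
          omega
        simp_rw [hiff]
        rw [tsum_eq_sum (s := Finset.Ico (2 ^ n - 1) (2 ^ (n + 1) - 1))]
        · exact Finset.sum_congr rfl fun k hk => if_pos hk
        · intro k hk; exact if_neg hk
    _ ≤ ∑' n : ℕ, ENNReal.ofReal (c * 513) *
          (ENNReal.ofReal (Minf f (rr n) ^ p) * ENNReal.ofReal (tailInt ω (rr n))) := by
        refine ENNReal.tsum_le_tsum fun n => ?_
        have ht := (tail_pos hω n).le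
        have hMp : 0 ≤ Minf f (rr n) ^ p := Real.rpow_nonneg minf_nonneg _
        rw [← Finset.mul_sum, ← ENNReal.ofReal_sum_of_nonneg (fun k _ => yy_nonneg _ _ _),
          ← ENNReal.ofReal_mul (by positivity), ← ENNReal.ofReal_mul hMp,
          ← ENNReal.ofReal_mul (by positivity)]
        apply ENNReal.ofReal_le_ofReal
        calc _ ≤ c * tailInt ω (rr n) * (513 * Minf f (rr n) ^ p) := by
              gcongr
              exact block hp1 hp2 hf hi n
          _ = _ := by ring
    _ ≤ _ := by
        have e : ENNReal.ofReal (c*513*((m:ℝ)/(1-q))) = ENNReal.ofReal (c*513) * ENNReal.ofReal ((m:ℝ)/(1-q)) := ENNReal.ofReal_mul (by positivity)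
        rw [ENNReal.tsum_mul_left, e, mul_assoc]
        exact mul_le_mul' le_rfl hJ

theorem statement6 (p : ℝ) (hp1 : 1 ≤ p) (hp2 : p ≤ 2)
    (ω : ℝ → ℝ) (hω : IsRadialWeight ω) (hD : Dclass ω) :
    ∃ C : ℝ, 1 ≤ C ∧ ∀ f : ℂ → ℂ, DifferentiableOn ℂ f (ball (0:ℂ) 1) →
      InjOn f (ball (0:ℂ) 1) →
      ((1 / C) * (∑' k : ℕ, ‖coefF f k‖ ^ p * ((k : ℝ) + 1) ^ (p - 1)
            * momentW ω k) ≤ Jp p ω f ∧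
        Jp p ω f ≤ C * ∑' k : ℕ, ‖coefF f k‖ ^ p * ((k : ℝ) + 1) ^ (p - 1)
            * momentW ω k) := by
  obtain ⟨C1, hC1, hU⟩ := upper_bound hp1 hp2 hω hD
  obtain ⟨C2, hC2, hL⟩ := lower_bound hp1 hp2 hω hD
  refine ⟨max 1 (max C1 C2), le_max_left _ _, fun f hf hi => ?_⟩
  set C := max 1 (max C1 C2) with hC
  have hC0 : 0 < C := lt_of_lt_of_le one_pos (le_max_left _ _)
  have hCC1 : C1 ≤ C := (le_max_left _ _).trans (le_max_right _ _)
  have hCC2 : C2 ≤ C := (le_max_right _ _).trans (le_max_right _ _)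
  have hS : ∑' k : ℕ, ‖coefF f k‖ ^ p * ((k : ℝ) + 1) ^ (p - 1) * momentW ω k =
      (∑' k : ℕ, ENNReal.ofReal (yy p f k * momentW ω k)).toReal := by
    rw [ENNReal.tsum_toReal_eq (fun _ => ENNReal.ofReal_ne_top)]
    refine tsum_congr fun k => ?_
    rw [ENNReal.toReal_ofReal (mul_nonneg (yy_nonneg _ _ _) (moment_nonneg hω k))]
    rfl
  have hJ : Jp p ω f =
      (∫⁻ x in Ioo (0:ℝ) 1, ENNReal.ofReal (Minf f x ^ p) * ENNReal.ofReal (ω x)).toReal := by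
    unfold Jp
    rw [integral_eq_lintegral_of_nonneg_ae]
    · congr 1
      refine lintegral_congr fun x => ?_
      exact ENNReal.ofReal_mul (Real.rpow_nonneg minf_nonneg _)
    · exact Filter.Eventually.of_forall fun x =>
        mul_nonneg (Real.rpow_nonneg minf_nonneg _) (hω.2.1 x)
    · have hmono : MonotoneOn (fun x => Minf f x) (Ioo 0 1) := fun x hx y hy hxy =>
        minf_mono hf hx.1.le hxy hy.2
      have := aemeasurable_restrict_of_monotoneOn (μ := volume) measurableSet_Ioo hmono
      exact ((this.pow_const p).mul hω.1.aemeasurable).aestronglyMeasurable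
  have hU' := hU f hf
  have hL' := hL f hf hi
  rw [hS, hJ]
  set S := ∑' k : ℕ, ENNReal.ofReal (yy p f k * momentW ω k)
  set J := ∫⁻ x in Ioo (0:ℝ) 1, ENNReal.ofReal (Minf f x ^ p) * ENNReal.ofReal (ω x)
  by_cases hSt : S = ⊤
  · have hJt : J = ⊤ := by
      by_contra h
      rw [hSt, top_le_iff] at hL'
      exact ENNReal.mul_ne_top ENNReal.ofReal_ne_top h hL'
    simp [hSt, hJt]
  · have hJt : J ≠ ⊤ := ne_top_of_le_ne_top (ENNReal.mul_ne_top ENNReal.ofReal_ne_top hSt) hU'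
    have u := ENNReal.toReal_mono (ENNReal.mul_ne_top ENNReal.ofReal_ne_top hSt) hU'
    have v := ENNReal.toReal_mono (ENNReal.mul_ne_top ENNReal.ofReal_ne_top hJt) hL'
    rw [ENNReal.toReal_mul, ENNReal.toReal_ofReal hC1.le] at u
    rw [ENNReal.toReal_mul, ENNReal.toReal_ofReal hC2.le] at v
    constructor
    · rw [one_div, inv_mul_eq_div, div_le_iff₀ hC0, mul_comm]
      exact v.trans (mul_le_mul_of_nonneg_right hCC2 ENNReal.toReal_nonneg)
    · exact u.trans (mul_le_mul_of_nonneg_right hCC1 ENNReal.toReal_nonneg)
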